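/- arXiv:2604.00826 — 2 statements merged into one kernel-verified Lean document; each statement's English description precedes it below -/
import Mathlib

section
/- Recursive feasibility of the hybrid RL-MPC scheme (Proposition 1): Suppose Assumption 2' holds, i.e. there exists a terminal control law κ_f : S → U_d → U_c such that for every x ∈ X_f and every u_d ∈ U_d one has f(x, κ_f(x, u_d), u_d) ∈ X_f, and X_f ⊆ X. Consider any closed-loop evolution defined recursively as follows: x(0) ∈ S and a discrete sequence d⁰ : Fin N → U_d are such that the MPC problem is feasible at (x(0), d⁰); at each time j ∈ ℕ, a feasibility witness u^j : Fin N → U_c for (x(j), d^j) is selected, the inputs u^j_0 and d^j_0 are applied so that x(j+1) = f(x(j), u^j_0, d^j_0), and the next discrete sequence is d^{j+1}_k = d^j_{k+1} for k = 0, …, N−2 and d^{j+1}_{N−1} = δ_j for an arbitrary δ_j ∈ U_d. Then for every j ∈ ℕ the MPC problem is feasible at (x(j), d^j), and in particular the closed-loop trajectory satisfies x(j) ∈ X for all j ∈ ℕ. -/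
/-- The reduced MPC problem is feasible at `(x, d)`: there exist continuous inputs
`u : Fin N → U_c` and states `x_0, …, x_N` with `x_0 = x`,
`x_{k+1} = f(x_k, u_k, d_k)`, `x_k ∈ X` for all `k`, and `x_N ∈ X_f`. -/
def MPCFeasible {S Uc Ud : Type*} (X Xf : Set S) (f : S → Uc → Ud → S) (N : ℕ)
    (x : S) (d : Fin N → Ud) : Prop :=
  ∃ (u : Fin N → Uc) (xs : Fin (N + 1) → S),
    xs 0 = x ∧
    (∀ k : Fin N, xs k.succ = f (xs k.castSucc) (u k) (d k)) ∧
    (∀ k : Fin (N + 1), xs k ∈ X) ∧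
    xs (Fin.last N) ∈ Xf

section Trajectories

variable {S Uc Ud : Type*} {f : S → Uc → Ud → S} {n : ℕ}

/-- The states `xs` form a trajectory of `f` driven by the continuous inputs `u` and the discrete
inputs `d`; there is one more state than there are inputs. -/
def IsTrajectory (f : S → Uc → Ud → S) (u : Fin n → Uc) (d : Fin n → Ud)
    (xs : Fin (n + 1) → S) : Prop :=
  ∀ k : Fin n, xs k.succ = f (xs k.castSucc) (u k) (d k)

theorem IsTrajectory.tail {u : Fin (n + 1) → Uc} {d : Fin (n + 1) → Ud} {xs : Fin (n + 2) → S}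
    (h : IsTrajectory f u d xs) : IsTrajectory f (Fin.tail u) (Fin.tail d) (Fin.tail xs) :=
  fun k => h k.succ

theorem IsTrajectory.snoc {u : Fin n → Uc} {d : Fin n → Ud} {xs : Fin (n + 1) → S}
    (h : IsTrajectory f u d xs) (uc : Uc) (ud : Ud) :
    IsTrajectory f (Fin.snoc u uc : Fin (n + 1) → Uc) (Fin.snoc d ud : Fin (n + 1) → Ud)
      (Fin.snoc xs (f (xs (Fin.last n)) uc ud) : Fin (n + 2) → S) := by
  refine Fin.lastCases ?_ fun k => ?_
  · simp only [Fin.succ_last, Fin.snoc_last, Fin.snoc_castSucc]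
  · simpa only [Fin.succ_castSucc, Fin.snoc_castSucc] using h k

end Trajectories

section Feasibility

variable {S Uc Ud : Type*} {X Xf : Set S} {f : S → Uc → Ud → S}

/-- `u` is a feasibility witness for the MPC problem at `(x, d)`: applied from `x` together with
`d`, it generates a trajectory that stays in `X` and ends in `Xf`. -/
def IsFeasibilityWitness (X Xf : Set S) (f : S → Uc → Ud → S) {N : ℕ} (x : S) (d : Fin N → Ud)
    (u : Fin N → Uc) : Prop :=
  ∃ xs : Fin (N + 1) → S,
    xs 0 = x ∧ IsTrajectory f u d xs ∧ (∀ k, xs k ∈ X) ∧ xs (Fin.last N) ∈ Xf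

/-- Control invariance of the terminal set under every discrete input: the continuous input that
keeps the state in `Xf` may depend on both the state and the discrete input. This is the pointwise
form of the existence of a terminal control law. -/
def IsControlInvariant (f : S → Uc → Ud → S) (Xf : Set S) : Prop :=
  ∀ x ∈ Xf, ∀ ud : Ud, ∃ uc : Uc, f x uc ud ∈ Xf

theorem MPCFeasible.mem {N : ℕ} {x : S} {d : Fin N → Ud} (h : MPCFeasible X Xf f N x d) :
    x ∈ X := by
  obtain ⟨_, xs, rfl, -, hX, -⟩ := h
  exact hX 0

-- Drop the first step of the witnessing trajectory; its endpoint lies in `Xf`, so control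
-- invariance supplies a last step whatever discrete input `ud` is appended.
theorem IsFeasibilityWitness.mpcFeasible_shift {n : ℕ} {x : S} {d : Fin (n + 1) → Ud}
    {u : Fin (n + 1) → Uc} (h : IsFeasibilityWitness X Xf f x d u) (hXf : Xf ⊆ X)
    (hinv : IsControlInvariant f Xf) (ud : Ud) :
    MPCFeasible X Xf f (n + 1) (f x (u 0) (d 0)) (Fin.snoc (Fin.tail d) ud) := by
  obtain ⟨xs, rfl, htraj, hX, hlast⟩ := h
  obtain ⟨uc, huc⟩ := hinv _ hlast ud
  refine ⟨Fin.snoc (Fin.tail u) uc, Fin.snoc (Fin.tail xs) (f (xs (Fin.last _)) uc ud),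
    ?_, htraj.tail.snoc uc ud, ?_, ?_⟩
  · exact htraj 0
  · refine Fin.forall_fin_succ'.2 ⟨fun k => ?_, ?_⟩
    · simpa only [Fin.snoc_castSucc, Fin.tail] using hX k.succ
    · simpa only [Fin.snoc_last] using hXf huc
  · simpa only [Fin.snoc_last] using huc

end Feasibility

theorem snoc_tail_apply {α : Type*} {n : ℕ} (d : Fin (n + 1) → α) (a : α) (k : Fin (n + 1)) :
    (Fin.snoc (Fin.tail d) a : Fin (n + 1) → α) k =
      if h : (k : ℕ) + 1 < n + 1 then d ⟨(k : ℕ) + 1, h⟩ else a := by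
  induction k using Fin.lastCases with
  | last => simp
  | cast k => simp [Fin.tail, Fin.succ]

theorem mpc_recursive_feasibility_general
    {S Uc Ud : Type*} (X Xf : Set S) (f : S → Uc → Ud → S) (N : ℕ) (hN : 0 < N)
    (hXfX : Xf ⊆ X) (hinv : IsControlInvariant f Xf)
    (x : ℕ → S) (d : ℕ → Fin N → Ud) (u : ℕ → Fin N → Uc) (δ : ℕ → Ud)
    (hfeas0 : MPCFeasible X Xf f N (x 0) (d 0))
    (hwit : ∀ j : ℕ, MPCFeasible X Xf f N (x j) (d j) →
      IsFeasibilityWitness X Xf f (x j) (d j) (u j))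
    (hstep : ∀ j : ℕ, x (j + 1) = f (x j) (u j ⟨0, hN⟩) (d j ⟨0, hN⟩))
    (hshift : ∀ (j : ℕ) (k : Fin N),
      d (j + 1) k = if h : (k : ℕ) + 1 < N then d j ⟨(k : ℕ) + 1, h⟩ else δ j) :
    (∀ j : ℕ, MPCFeasible X Xf f N (x j) (d j)) ∧ (∀ j : ℕ, x j ∈ X) := by
  obtain ⟨n, rfl⟩ := Nat.exists_eq_add_one.2 hN
  have hd (j : ℕ) : d (j + 1) = Fin.snoc (Fin.tail (d j)) (δ j) :=
    funext fun k => (hshift j k).trans (snoc_tail_apply (d j) (δ j) k).symm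
  have hfeas (j : ℕ) : MPCFeasible X Xf f (n + 1) (x j) (d j) := by
    induction j with
    | zero => exact hfeas0
    | succ j ih =>
      rw [hstep j, hd j]
      exact (hwit j ih).mpcFeasible_shift hXfX hinv (δ j)
  exact ⟨hfeas, fun j => (hfeas j).mem⟩

/-- Recursive feasibility of the hybrid RL-MPC scheme (Proposition 1). -/
theorem mpc_recursive_feasibility
    {S Uc Ud : Type*} [Nonempty Ud] [Finite Ud]
    (X Xf : Set S) (f : S → Uc → Ud → S) (N : ℕ) (hN : 0 < N)
    (hXfX : Xf ⊆ X)
    (κf : S → Ud → Uc)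
    (hκ : ∀ x ∈ Xf, ∀ ud : Ud, f x (κf x ud) ud ∈ Xf)
    -- closed-loop states, discrete sequences, selected continuous inputs,
    -- and arbitrary terminal discrete inputs:
    (x : ℕ → S) (d : ℕ → Fin N → Ud) (u : ℕ → Fin N → Uc) (δ : ℕ → Ud)
    -- the MPC problem is feasible at (x(0), d⁰):
    (hfeas0 : MPCFeasible X Xf f N (x 0) (d 0))
    -- at each time j, u^j is a feasibility witness for (x(j), d^j):
    (hwit : ∀ j : ℕ, MPCFeasible X Xf f N (x j) (d j) →
      ∃ xs : Fin (N + 1) → S,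
        xs 0 = x j ∧
        (∀ k : Fin N, xs k.succ = f (xs k.castSucc) (u j k) (d j k)) ∧
        (∀ k : Fin (N + 1), xs k ∈ X) ∧
        xs (Fin.last N) ∈ Xf)
    -- the first inputs are applied to the system:
    (hstep : ∀ j : ℕ, x (j + 1) = f (x j) (u j ⟨0, hN⟩) (d j ⟨0, hN⟩))
    -- the discrete sequence is shifted and completed with δ_j:
    (hshift : ∀ (j : ℕ) (k : Fin N),
      d (j + 1) k = if h : (k : ℕ) + 1 < N then d j ⟨(k : ℕ) + 1, h⟩ else δ j) :
    (∀ j : ℕ, MPCFeasible X Xf f N (x j) (d j)) ∧ (∀ j : ℕ, x j ∈ X) :=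
  mpc_recursive_feasibility_general X Xf f N hN hXfX (fun x hx ud => ⟨κf x ud, hκ x hx ud⟩)
    x d u δ hfeas0 hwit hstep hshift
end

section
/- Verification theorem for greedy policies: Let γ ∈ (0,1), let ℓ : S → U → ℝ satisfy |ℓ(x, u)| ≤ M for all x, u, and let J*(x) be the infimum over input sequences u : ℕ → U of ∑_{j=0}^∞ γ^j ℓ(x_j, u_j) along the trajectory from x. Suppose π : S → U is a deterministic policy attaining the infimum in the Bellman equation at every state, i.e. J*(x) = ℓ(x, π(x)) + γ · J*(f(x, π(x))) for all x ∈ S. Then π is optimal: for every x ∈ S, the closed-loop discounted cost J^π(x) := ∑_{j=0}^∞ γ^j ℓ(x_j, π(x_j)) along the trajectory x_0 = x, x_{j+1} = f(x_j, π(x_j)) equals J*(x). -/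
/-- Trajectory of the deterministic system `f` from `x` under input sequence `u`. -/
def traj {S U : Type*} (f : S → U → S) (x : S) (u : ℕ → U) : ℕ → S
  | 0 => x
  | j + 1 => f (traj f x u j) (u j)

/-- Optimal cost: infimum over input sequences of the discounted infinite-horizon cost. -/
noncomputable def Jstar {S U : Type*} [Nonempty U] (f : S → U → S) (γ : ℝ)
    (ℓ : S → U → ℝ) (x : S) : ℝ :=
  ⨅ u : ℕ → U, ∑' j : ℕ, γ ^ j * ℓ (traj f x u j) (u j)

/-- Closed-loop trajectory of the system `f` from `x` under deterministic policy `π`. -/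
def trajPolicy {S U : Type*} (f : S → U → S) (π : S → U) (x : S) : ℕ → S
  | 0 => x
  | j + 1 => f (trajPolicy f π x j) (π (trajPolicy f π x j))

/-- Closed-loop discounted cost of the deterministic policy `π`. -/
noncomputable def Jpi {S U : Type*} (f : S → U → S) (π : S → U) (γ : ℝ)
    (ℓ : S → U → ℝ) (x : S) : ℝ :=
  ∑' j : ℕ, γ ^ j * ℓ (trajPolicy f π x j) (π (trajPolicy f π x j))

/-! Write `x₀, x₁, …` for the closed-loop trajectory of `π`. Along it the Bellman equation turns
`γⁿ ℓ(xₙ, π(xₙ))` into `wₙ - wₙ₊₁` with `wₙ = γⁿ J*(xₙ)`. Bounded stage costs make `J*` bounded, so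
`w` is summable and the discounted costs telescope to `w₀ = J*(x)`. -/

section Order

variable {ι α : Type*} [Nonempty ι] [ConditionallyCompleteLinearOrder α] [AddCommGroup α]
  [IsOrderedAddMonoid α]

theorem abs_ciInf_le {a : ι → α} {B : α} (ha : ∀ i, |a i| ≤ B) : |⨅ i, a i| ≤ B := by
  have lower : ∀ i, -B ≤ a i := fun i => (abs_le.mp (ha i)).1
  have bdd : BddBelow (Set.range a) := ⟨-B, Set.forall_mem_range.mpr lower⟩
  obtain ⟨i₀⟩ := ‹Nonempty ι›
  exact abs_le.mpr ⟨le_ciInf lower, ciInf_le_of_le bdd i₀ (abs_le.mp (ha i₀)).2⟩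

end Order

section Telescoping

variable {G : Type*} [AddCommGroup G] [TopologicalSpace G] [IsTopologicalAddGroup G]

theorem hasSum_sub_succ_of_summable {w : ℕ → G} (hw : Summable w) :
    HasSum (fun n => w n - w (n + 1)) (w 0) := by
  have shifted : HasSum (fun n => w (n + 1)) ((∑' n, w n) - w 0) := by
    simpa only [Finset.sum_range_one] using (hasSum_nat_add_iff' 1).mpr hw.hasSum
  simpa only [sub_sub_cancel] using hw.hasSum.sub shifted

end Telescoping

section Discounting

variable {𝕜 E : Type*} [SeminormedRing 𝕜] [NormOneClass 𝕜] [SeminormedAddCommGroup E]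
  [Module 𝕜 E] [IsBoundedSMul 𝕜 E] {γ : 𝕜} {v : ℕ → E} {B : ℝ}

theorem norm_pow_smul_le_of_norm_le (γ : 𝕜) (hv : ∀ n, ‖v n‖ ≤ B) (n : ℕ) :
    ‖γ ^ n • v n‖ ≤ ‖γ‖ ^ n * B :=
  (norm_smul_le _ _).trans <|
    mul_le_mul (norm_pow_le γ n) (hv n) (norm_nonneg _) (by positivity)

theorem norm_tsum_pow_smul_le_of_norm_le (hγ : ‖γ‖ < 1) (hv : ∀ n, ‖v n‖ ≤ B) :
    ‖∑' n, γ ^ n • v n‖ ≤ (1 - ‖γ‖)⁻¹ * B :=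
  tsum_of_norm_bounded ((hasSum_geometric_of_lt_one (norm_nonneg γ) hγ).mul_right B)
    (norm_pow_smul_le_of_norm_le γ hv)

variable [CompleteSpace E]

theorem summable_pow_smul_of_norm_le (hγ : ‖γ‖ < 1) (hv : ∀ n, ‖v n‖ ≤ B) :
    Summable fun n => γ ^ n • v n :=
  .of_norm_bounded ((summable_geometric_of_lt_one (norm_nonneg γ) hγ).mul_right B)
    (norm_pow_smul_le_of_norm_le γ hv)

theorem hasSum_pow_smul_of_eq_add_smul_succ {c : ℕ → E} (hγ : ‖γ‖ < 1) (hv : ∀ n, ‖v n‖ ≤ B)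
    (hc : ∀ n, v n = c n + γ • v (n + 1)) : HasSum (fun n => γ ^ n • c n) (v 0) := by
  have telescopes : ∀ n, γ ^ n • c n = γ ^ n • v n - γ ^ (n + 1) • v (n + 1) := fun n => by
    rw [pow_succ, mul_smul, ← smul_sub, ← eq_sub_of_add_eq (hc n).symm]
  simpa only [← telescopes, pow_zero, one_smul] using
    hasSum_sub_succ_of_summable (summable_pow_smul_of_norm_le hγ hv)

end Discounting

section Control

variable {S U : Type*} {f : S → U → S} {π : S → U} {γ : ℝ} {ℓ : S → U → ℝ} {x : S}

theorem abs_Jstar_le [Nonempty U] {M : ℝ} (hγ : |γ| < 1) (hℓ : ∀ x u, |ℓ x u| ≤ M) (x : S) :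
    |Jstar f γ ℓ x| ≤ (1 - |γ|)⁻¹ * M :=
  abs_ciInf_le fun u => norm_tsum_pow_smul_le_of_norm_le (γ := γ)
    (v := fun j => ℓ (traj f x u j) (u j)) hγ fun _ => hℓ _ _

theorem Jpi_eq_of_bounded_of_bellman {v : S → ℝ} {B : ℝ} (hγ : |γ| < 1)
    (hv : ∀ n, |v (trajPolicy f π x n)| ≤ B)
    (hbellman : ∀ n, v (trajPolicy f π x n) =
      ℓ (trajPolicy f π x n) (π (trajPolicy f π x n)) + γ * v (trajPolicy f π x (n + 1))) :
    Jpi f π γ ℓ x = v x :=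
  (hasSum_pow_smul_of_eq_add_smul_succ (γ := γ) (v := fun n => v (trajPolicy f π x n))
    (c := fun n => ℓ (trajPolicy f π x n) (π (trajPolicy f π x n))) hγ hv hbellman).tsum_eq

theorem greedy_policy_is_optimal_general [Nonempty U] {M : ℝ} (hγ : |γ| < 1)
    (hℓ : ∀ x u, |ℓ x u| ≤ M)
    (hgreedy : ∀ n, Jstar f γ ℓ (trajPolicy f π x n) =
      ℓ (trajPolicy f π x n) (π (trajPolicy f π x n)) +
        γ * Jstar f γ ℓ (trajPolicy f π x (n + 1))) :
    Jpi f π γ ℓ x = Jstar f γ ℓ x :=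
  Jpi_eq_of_bounded_of_bellman hγ (fun _ => abs_Jstar_le hγ hℓ _) hgreedy

end Control

/-- Verification theorem for greedy policies: a policy attaining the infimum in the
Bellman equation at every state is optimal. -/
theorem greedy_policy_is_optimal
    {S U : Type*} [Nonempty U]
    (f : S → U → S) (γ : ℝ) (hγ : 0 < γ) (hγ1 : γ < 1)
    (ℓ : S → U → ℝ) (M : ℝ) (hℓ : ∀ x u, |ℓ x u| ≤ M)
    (π : S → U)
    (hgreedy : ∀ x : S, Jstar f γ ℓ x = ℓ x (π x) + γ * Jstar f γ ℓ (f x (π x))) :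
    ∀ x : S, Jpi f π γ ℓ x = Jstar f γ ℓ x := by
  have hγ_abs : |γ| < 1 := abs_lt.mpr ⟨by linarith, hγ1⟩
  exact fun _ => greedy_policy_is_optimal_general hγ_abs hℓ fun _ => hgreedy _
end
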